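/- arXiv:2110.00237 — 6 statements merged into one kernel-verified Lean document; each statement's English description precedes it below -/
import Mathlib

section
/- Let s be a real number, let a, b, c, d be nonnegative integers with a > 0, c > 0 and ad = bc, and let r₁, r₂ be positive integers such that r₁·a = r₂·c and r₁·b = r₂·d. Then for every positive integer n, r₂^s / σ_s(r₁) ≤ σ_s(an+b) / σ_s(cn+d) ≤ σ_s(r₂) / r₁^s. -/
/-!
With `A = a n + b` and `C = c n + d`, the hypotheses give `r₁ A = r₂ C`. Both bounds then come from
`m^s σ_s(k) ≤ σ_s(m k) ≤ σ_s(m) σ_s(k)` for positive `m`, `k`: the left inequality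
(`rpow_mul_sigmaR_le`) holds because `e ↦ m e` embeds the divisors of `k` in those of `m k`, the
right one (`sigmaR_mul_le`) because every divisor of `m k` is a divisor of `m` times a divisor
of `k`.
-/

/-- `σ_s(n) = ∑_{d ∣ n} d^s` over the positive divisors of `n`. -/
noncomputable def sigmaR (s : ℝ) (n : ℕ) : ℝ := ∑ d ∈ n.divisors, (d : ℝ) ^ s

lemma sigmaR_pos (s : ℝ) {n : ℕ} (hn : 0 < n) : 0 < sigmaR s n := by
  refine Finset.sum_pos (fun e he => ?_) ⟨1, by simp [hn.ne']⟩
  have : 0 < e := Nat.pos_of_mem_divisors he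
  positivity

lemma rpow_mul_sigmaR_le (s : ℝ) {m k : ℕ} (hm : 0 < m) (hk : 0 < k) :
    (m : ℝ) ^ s * sigmaR s k ≤ sigmaR s (m * k) := by
  have hinj : Set.InjOn (fun e => m * e) (k.divisors : Set ℕ) :=
    fun x _ y _ h => Nat.eq_of_mul_eq_mul_left hm h
  have heq : (m : ℝ) ^ s * sigmaR s k
      = ∑ e ∈ k.divisors.image (fun e => m * e), (e : ℝ) ^ s := by
    rw [Finset.sum_image hinj, sigmaR, Finset.mul_sum]
    refine Finset.sum_congr rfl fun e _ => ?_
    rw [Nat.cast_mul, Real.mul_rpow (by positivity) (by positivity)]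
  rw [heq, sigmaR]
  refine Finset.sum_le_sum_of_subset_of_nonneg ?_ (fun e _ _ => by positivity)
  intro x hx
  obtain ⟨e, he, rfl⟩ := Finset.mem_image.1 hx
  exact Nat.mem_divisors.2
    ⟨Nat.mul_dvd_mul_left m (Nat.dvd_of_mem_divisors he), (Nat.mul_pos hm hk).ne'⟩

lemma sigmaR_mul_le (s : ℝ) (m k : ℕ) :
    sigmaR s (m * k) ≤ sigmaR s m * sigmaR s k := by
  have heq : sigmaR s m * sigmaR s k
      = ∑ p ∈ m.divisors ×ˢ k.divisors, ((p.1 * p.2 : ℕ) : ℝ) ^ s := by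
    rw [sigmaR, sigmaR, Finset.sum_mul_sum, Finset.sum_product]
    refine Finset.sum_congr rfl fun e _ => Finset.sum_congr rfl fun f _ => ?_
    rw [Nat.cast_mul, Real.mul_rpow (by positivity) (by positivity)]
  rw [heq, sigmaR]
  -- A divisor of `m * k` may factor in several ways, so its fibre contributes at least one term.
  have hsub : (m * k).divisors ⊆ (m.divisors ×ˢ k.divisors).image (fun p => p.1 * p.2) := by
    intro x hx
    obtain ⟨hx, h0⟩ := Nat.mem_divisors.1 hx
    obtain ⟨e, f, he, hf, rfl⟩ := exists_dvd_and_dvd_of_dvd_mul hx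
    exact Finset.mem_image.2 ⟨(e, f), Finset.mem_product.2
      ⟨Nat.mem_divisors.2 ⟨he, left_ne_zero_of_mul h0⟩,
        Nat.mem_divisors.2 ⟨hf, right_ne_zero_of_mul h0⟩⟩, rfl⟩
  refine (Finset.sum_le_sum_of_subset_of_nonneg hsub fun e _ _ => by positivity).trans ?_
  exact Finset.sum_image_le_of_nonneg (f := fun e : ℕ => (e : ℝ) ^ s)
    fun _ _ => by positivity

theorem stmt_1 (s : ℝ) (a b c d : ℕ) (ha : 0 < a) (hc : 0 < c)
    (habcd : a * d = b * c) (r₁ r₂ : ℕ) (hr₁ : 0 < r₁) (hr₂ : 0 < r₂)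
    (h₁ : r₁ * a = r₂ * c) (h₂ : r₁ * b = r₂ * d) :
    ∀ n : ℕ, 0 < n →
      (r₂ : ℝ) ^ s / sigmaR s r₁ ≤ sigmaR s (a * n + b) / sigmaR s (c * n + d) ∧
      sigmaR s (a * n + b) / sigmaR s (c * n + d) ≤ sigmaR s r₂ / (r₁ : ℝ) ^ s := by
  intro n hn
  have hA : 0 < a * n + b := by positivity
  have hC : 0 < c * n + d := by positivity
  have key : r₁ * (a * n + b) = r₂ * (c * n + d) := by
    linear_combination n * h₁ + h₂
  have hr₁s : (0 : ℝ) < (r₁ : ℝ) ^ s := by positivity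
  constructor
  · rw [div_le_div_iff₀ (sigmaR_pos s hr₁) (sigmaR_pos s hC)]
    calc (r₂ : ℝ) ^ s * sigmaR s (c * n + d)
        ≤ sigmaR s (r₂ * (c * n + d)) := rpow_mul_sigmaR_le s hr₂ hC
      _ = sigmaR s (r₁ * (a * n + b)) := by rw [key]
      _ ≤ sigmaR s r₁ * sigmaR s (a * n + b) := sigmaR_mul_le s _ _
      _ = sigmaR s (a * n + b) * sigmaR s r₁ := mul_comm _ _
  · rw [div_le_div_iff₀ (sigmaR_pos s hC) hr₁s]
    calc sigmaR s (a * n + b) * (r₁ : ℝ) ^ s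
        = (r₁ : ℝ) ^ s * sigmaR s (a * n + b) := mul_comm _ _
      _ ≤ sigmaR s (r₁ * (a * n + b)) := rpow_mul_sigmaR_le s hr₁ hA
      _ = sigmaR s (r₂ * (c * n + d)) := by rw [key]
      _ ≤ sigmaR s r₂ * sigmaR s (c * n + d) := sigmaR_mul_le s _ _
end

section
/- Let a, b, c, d be nonnegative integers with a > 0, c > 0, and ad ≠ bc. Then there exists a strictly increasing sequence (n_k) of positive integers, not depending on s, such that for every s ∈ [0,1], the quotient σ_s(a·n_k+b) / σ_s(c·n_k+d) tends to 0 as k → ∞. -/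
/-!
Dividing by `m ^ s` turns `σ_s(m)` into `∑_{e ∣ m} e ^ (-s)`. For `s ∈ [0, 1]` this lies between
`∑_{e ∣ m} 1 / e` and the number of divisors of `m`, both independent of `s`. It therefore suffices
to find, for every `k`, arbitrarily large `n` such that `a n + b` has boundedly many divisors while
`c n + d` is divisible by every `j Q + 1` with `j < k`, where `Q = a c |ad - bc|`: the quotient is
then bounded by a constant times the inverse of a harmonic sum of length `k`.

Such `n` come from Dirichlet's theorem (`exists_good`). With `g = gcd(a, b)`, `a = g a'`,
`b = g b'` and `M = ∏_{j < k} (j Q + 1)`, the condition `M ∣ c n + d` is a congruence `n ≡ n₀ mod M`,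
as `M` is prime to `c`. The progression of values `a' n + b'` for these `n` has difference `a' M`,
which is prime to `a' n₀ + b'` because a common prime factor with `M` would divide `ad - bc`. So
`a' n + b'` is a prime for infinitely many of them, and `a n + b` is `g` times that prime.
-/

open Filter Topology

lemma sigmaR_le (s : ℝ) (hs : 0 ≤ s) (m : ℕ) :
    sigmaR s m ≤ (m.divisors.card : ℝ) * (m : ℝ) ^ s := by
  unfold sigmaR
  rw [← nsmul_eq_mul]
  apply Finset.sum_le_card_nsmul
  intro e he
  have := Nat.divisor_le he
  gcongr

lemma le_sigmaR (s : ℝ) (hs1 : s ≤ 1) (m : ℕ) :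
    (m : ℝ) ^ s * ∑ e ∈ m.divisors, (1 : ℝ) / e ≤ sigmaR s m := by
  unfold sigmaR
  rw [← Nat.sum_div_divisors m (fun e => (e : ℝ) ^ s), Finset.mul_sum]
  apply Finset.sum_le_sum
  intro e he
  have hpos : 0 < e := Nat.pos_of_mem_divisors he
  have h1 : (1 : ℝ) ≤ e := by exact_mod_cast hpos
  rw [Nat.cast_div (Nat.dvd_of_mem_divisors he) (by positivity),
    Real.div_rpow (by positivity) (by positivity), mul_one_div]
  have : (e : ℝ) ^ s ≤ e := by
    simpa using Real.rpow_le_rpow_of_exponent_le h1 hs1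
  gcongr

lemma harmonic_le_sum_divisors (Q : ℕ) (hQ : 0 < Q) (m k : ℕ) (hm : 0 < m)
    (h : ∀ j < k, j * Q + 1 ∣ m) :
    (∑ j ∈ Finset.range k, (1 : ℝ) / (j + 1)) / Q ≤ ∑ e ∈ m.divisors, (1 : ℝ) / e := by
  have hinj : Function.Injective (fun j : ℕ => j * Q + 1) := by
    intro i j hij
    exact Nat.eq_of_mul_eq_mul_right hQ (Nat.succ_injective hij)
  calc (∑ j ∈ Finset.range k, (1 : ℝ) / (j + 1)) / Q
      ≤ ∑ j ∈ Finset.range k, (1 : ℝ) / ((j * Q + 1 : ℕ) : ℝ) := by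
        rw [Finset.sum_div]
        apply Finset.sum_le_sum
        intro j _
        rw [div_div]
        have hQ1 : (1 : ℝ) ≤ Q := by exact_mod_cast hQ
        push_cast
        gcongr
        linarith
    _ = ∑ e ∈ (Finset.range k).image (fun j : ℕ => j * Q + 1), (1 : ℝ) / e := by
        rw [Finset.sum_image (fun i _ j _ hij => hinj hij)]
    _ ≤ ∑ e ∈ m.divisors, (1 : ℝ) / e := by
        apply Finset.sum_le_sum_of_subset_of_nonneg
        · intro e he
          obtain ⟨j, hj, rfl⟩ := Finset.mem_image.1 he
          exact Nat.mem_divisors.2 ⟨h j (Finset.mem_range.1 hj), hm.ne'⟩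
        · intros
          positivity

lemma card_divisors_mul_prime_le (g p : ℕ) (hp : p.Prime) :
    (g * p).divisors.card ≤ g.divisors.card * 2 := by
  rw [Nat.divisors_mul]
  refine Finset.card_mul_le.trans ?_
  rw [hp.divisors, Finset.card_pair hp.one_lt.ne]

/-- The arithmetic core: Dirichlet's theorem makes `a n + b` a fixed multiple of a prime while
`c n + d` is divisible by the first `k` terms of the progression `1 mod Q`. -/
lemma exists_good (a b c d : ℕ) (ha : 0 < a) (habcd : a * d ≠ b * c)
    (k N : ℕ) :
    ∃ n, N ≤ n ∧ (∀ j < k, j * (a * c * ((a * d : ℤ) - b * c).natAbs) + 1 ∣ c * n + d) ∧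
      ∃ p, p.Prime ∧ a * n + b = Nat.gcd a b * p := by
  set D := ((a * d : ℤ) - b * c).natAbs with hD
  set Q := a * c * D with hQ
  set M := ∏ j ∈ Finset.range k, (j * Q + 1) with hM
  have hMQ : M.Coprime Q := by
    apply Nat.Coprime.prod_left
    intro j _
    simp
  have hM0 : M ≠ 0 := Finset.prod_ne_zero_iff.2 (by simp)
  have : NeZero M := ⟨hM0⟩
  have hMc : c.Coprime M := (Nat.Coprime.coprime_dvd_right ⟨a * D, by rw [hQ]; ring⟩ hMQ).symm
  have hMD : M.Coprime D := Nat.Coprime.coprime_dvd_right ⟨a * c, by rw [hQ]; ring⟩ hMQ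
  -- the residue class of `n` modulo `M` on which `M ∣ c * n + d`
  obtain ⟨n₀, hn₀⟩ : ∃ n₀ : ℕ, M ∣ c * n₀ + d := by
    refine ⟨(-(d : ZMod M) * (c : ZMod M)⁻¹).val, ?_⟩
    rw [← ZMod.natCast_eq_zero_iff]
    push_cast
    rw [ZMod.natCast_zmod_val, mul_left_comm, ZMod.coe_mul_inv_eq_one _ hMc]
    ring
  obtain ⟨g, a', b', hg, hcop, rfl, rfl⟩ : ∃ g a' b', 0 < g ∧ a'.Coprime b' ∧
      a = a' * g ∧ b = b' * g := by
    have hg := Nat.gcd_pos_of_pos_left b ha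
    obtain ⟨a', b', h, h1, h2⟩ := Nat.exists_coprime a b
    exact ⟨_, a', b', hg, h, h1, h2⟩
  have hgcd : Nat.gcd (a' * g) (b' * g) = g := by
    rw [Nat.gcd_mul_right, hcop, one_mul]
  have ha' : 0 < a' := Nat.pos_of_mul_pos_right ha
  have hco : (a' * n₀ + b').Coprime (a' * M) := by
    apply Nat.Coprime.mul_right
    · simpa [Nat.coprime_comm] using hcop
    · rw [Nat.coprime_iff_gcd_eq_one]
      by_contra hne
      obtain ⟨q, hq, hqd⟩ := Nat.exists_prime_and_dvd hne
      have h1 : q ∣ a' * n₀ + b' := hqd.trans (Nat.gcd_dvd_left _ _)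
      have h2 : q ∣ M := hqd.trans (Nat.gcd_dvd_right _ _)
      have h3 : q ∣ c * n₀ + d := h2.trans hn₀
      have h4 : q ∣ D := by
        rw [hD, ← Int.natCast_dvd]
        have e1 : (q : ℤ) ∣ (a' * n₀ + b') := by exact_mod_cast h1
        have e2 : (q : ℤ) ∣ (c * n₀ + d) := by exact_mod_cast h3
        have := (e2.mul_left ((a' : ℤ) * g)).sub (e1.mul_left ((c : ℤ) * g))
        have e : ((a' * g : ℕ) : ℤ) * d - (b' * g : ℕ) * c =
            (a' : ℤ) * g * (c * n₀ + d) - c * g * (a' * n₀ + b') := by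
          push_cast
          ring
        rwa [e]
      exact hq.one_lt.ne' (Nat.dvd_one.1 (hMD ▸ Nat.dvd_gcd h2 h4))
  obtain ⟨p, hpgt, hp, hpm⟩ := Nat.forall_exists_prime_gt_and_modEq
    (a' * n₀ + b' + a' * M * N) (by positivity : a' * M ≠ 0) hco
  obtain ⟨t, ht⟩ := (Nat.modEq_iff_dvd' (by omega)).1 hpm.symm
  have hpe : p = a' * (n₀ + M * t) + b' := by
    have : p = a' * M * t + (a' * n₀ + b') := by omega
    rw [this]; ring
  have hNt : N ≤ t := by
    have h : a' * M * N < a' * M * t := by omega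
    exact (Nat.lt_of_mul_lt_mul_left h).le
  refine ⟨n₀ + M * t, ?_, ?_, p, hp, ?_⟩
  · have : 1 * t ≤ M * t := Nat.mul_le_mul_right _ (Nat.pos_of_ne_zero hM0)
    omega
  · intro j hj
    have h1 : j * Q + 1 ∣ M := Finset.dvd_prod_of_mem _ (Finset.mem_range.2 hj)
    refine h1.trans ?_
    have : c * (n₀ + M * t) + d = (c * n₀ + d) + M * (c * t) := by ring
    rw [this]
    exact hn₀.add (dvd_mul_right _ _)
  · rw [hgcd, hpe]; ring

theorem stmt_5 (a b c d : ℕ) (ha : 0 < a) (hc : 0 < c) (habcd : a * d ≠ b * c) :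
    ∃ nk : ℕ → ℕ, StrictMono nk ∧ (∀ k, 0 < nk k) ∧
      ∀ s ∈ Set.Icc (0 : ℝ) 1,
        Tendsto (fun k => sigmaR s (a * nk k + b) / sigmaR s (c * nk k + d))
          atTop (𝓝 0) := by
  set Q := a * c * ((a * d : ℤ) - b * c).natAbs with hQ
  have hQpos : 0 < Q := by
    have : ((a * d : ℤ) - b * c) ≠ 0 := by
      rw [sub_ne_zero]; exact_mod_cast habcd
    have := Int.natAbs_pos.2 this
    positivity
  obtain ⟨nk, hmono, hnk⟩ := extraction_forall_of_frequently
    (P := fun k n => 0 < n ∧ (∀ j < k, j * Q + 1 ∣ c * n + d) ∧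
      ∃ p, p.Prime ∧ a * n + b = Nat.gcd a b * p) (by
    intro k
    rw [frequently_atTop]
    intro N
    obtain ⟨n, hn, h⟩ := exists_good a b c d ha habcd k (N + 1)
    exact ⟨n, by omega, by omega, h⟩)
  refine ⟨nk, hmono, fun k => (hnk k).1, ?_⟩
  rintro s ⟨hs0, hs1⟩
  set C : ℝ := ((Nat.gcd a b).divisors.card * 2 : ℕ) * ((a + b : ℕ) : ℝ) with hC
  have hH : Tendsto (fun k : ℕ => (∑ j ∈ Finset.range k, (1 : ℝ) / (j + 1)) / Q) atTop atTop :=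
    Real.tendsto_sum_range_one_div_nat_succ_atTop.atTop_div_const (by exact_mod_cast hQpos)
  refine tendsto_of_tendsto_of_tendsto_of_le_of_le' tendsto_const_nhds
    (hH.const_div_atTop C) ?_ ?_
  · filter_upwards with k
    unfold sigmaR
    positivity
  · filter_upwards [hH.eventually_gt_atTop 0] with k hk
    obtain ⟨hn, hdvd, p, hp, hpe⟩ := hnk k
    set n := nk k
    have hmpos : 0 < c * n + d := by positivity
    have hlow := le_sigmaR s hs1 (c * n + d)
    have hharm := harmonic_le_sum_divisors Q hQpos (c * n + d) k hmpos hdvd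
    have hup := sigmaR_le s hs0 (a * n + b)
    have hcard : ((a * n + b).divisors.card : ℝ) ≤ ((Nat.gcd a b).divisors.card * 2 : ℕ) := by
      rw [hpe]; exact_mod_cast card_divisors_mul_prime_le _ p hp
    have hle : a * n + b ≤ (a + b) * (c * n + d) := by
      have h1 : 1 * n ≤ c * n := Nat.mul_le_mul_right _ hc
      calc a * n + b ≤ (a + b) * n := by nlinarith
        _ ≤ (a + b) * (c * n + d) := Nat.mul_le_mul_left _ (by omega)
    have hpow : ((a * n + b : ℕ) : ℝ) ^ s ≤ ((a + b : ℕ) : ℝ) * ((c * n + d : ℕ) : ℝ) ^ s := by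
      have hab1 : (1 : ℝ) ≤ ((a + b : ℕ) : ℝ) := by exact_mod_cast (by omega : 1 ≤ a + b)
      calc ((a * n + b : ℕ) : ℝ) ^ s ≤ (((a + b : ℕ) : ℝ) * ((c * n + d : ℕ) : ℝ)) ^ s := by
            apply Real.rpow_le_rpow (by positivity) _ hs0
            exact_mod_cast hle
        _ = ((a + b : ℕ) : ℝ) ^ s * ((c * n + d : ℕ) : ℝ) ^ s :=
            Real.mul_rpow (by positivity) (by positivity)
        _ ≤ _ := by
            have := Real.rpow_le_rpow_of_exponent_le hab1 hs1
            rw [Real.rpow_one] at this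
            gcongr
    have hX : (0 : ℝ) < ((c * n + d : ℕ) : ℝ) ^ s := by positivity
    set X := ((c * n + d : ℕ) : ℝ) ^ s
    set H := (∑ j ∈ Finset.range k, (1 : ℝ) / (j + 1)) / Q
    have hnum : sigmaR s (a * n + b) ≤ C * X := by
      calc _ ≤ _ := hup
        _ ≤ ((Nat.gcd a b).divisors.card * 2 : ℕ) * (((a + b : ℕ) : ℝ) * X) := by gcongr
        _ = C * X := by rw [hC]; ring
    have hden : X * H ≤ sigmaR s (c * n + d) := le_trans (by gcongr) hlow
    calc sigmaR s (a * n + b) / sigmaR s (c * n + d) ≤ (C * X) / (X * H) := by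
          gcongr
      _ = C / H := by field_simp
end

section
/- Let s₁, s₂, …, s_ℓ be real numbers with -1 ≤ s₁ < s₂ < ⋯ < s_ℓ ≤ 1, and let a, b, c, d be nonnegative integers with a > 0, c > 0, and ad ≠ bc. Then there are infinitely many positive integers m and infinitely many positive integers n such that σ_s(am+b) < σ_s(cm+d) holds for every s ∈ {s₁, …, s_ℓ} and σ_s(an+b) > σ_s(cn+d) holds for every s ∈ {s₁, …, s_ℓ}. -/
lemma sigmaR_mul_prime_le {g p : ℕ} (hp : p.Prime) {s : ℝ} :
    sigmaR s (g * p) ≤ 2 * g * ((g * p : ℕ) : ℝ) ^ max s 0 := by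
  have hcard : (g * p).divisors.card ≤ g * 2 := by
    rw [Nat.divisors_mul]
    refine Finset.card_mul_le.trans (Nat.mul_le_mul (Nat.card_divisors_le_self g) ?_)
    rw [hp.divisors]
    exact Finset.card_le_two
  have hterm : ∀ e ∈ (g * p).divisors, (e : ℝ) ^ s ≤ ((g * p : ℕ) : ℝ) ^ max s 0 := by
    intro e he
    have h1 : (1 : ℝ) ≤ e := by exact_mod_cast Nat.pos_of_mem_divisors he
    have h2 : (e : ℝ) ≤ (g * p : ℕ) := by exact_mod_cast Nat.divisor_le he
    exact (Real.rpow_le_rpow_of_exponent_le h1 (le_max_left s 0)).trans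
      (Real.rpow_le_rpow (by linarith) h2 (le_max_right s 0))
  have hsum := Finset.sum_le_card_nsmul _ _ _ hterm
  rw [nsmul_eq_mul] at hsum
  refine hsum.trans (mul_le_mul_of_nonneg_right ?_ (by positivity))
  have : (((g * p).divisors.card : ℕ) : ℝ) ≤ ((g * 2 : ℕ) : ℝ) := by exact_mod_cast hcard
  push_cast at this
  linarith

/-- For `s ≤ 0` this is a termwise comparison; for `s ≥ 0` it follows from the reflection
`σ_s(n) = n^s σ_{-s}(n)`. -/
lemma rpow_mul_le_sigmaR {n : ℕ} {s : ℝ} (h1 : -1 ≤ s) (h2 : s ≤ 1) :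
    (n : ℝ) ^ max s 0 * sigmaR (-1) n ≤ sigmaR s n := by
  rcases le_total s 0 with hs | hs
  · rw [max_eq_right hs, Real.rpow_zero, one_mul]
    refine Finset.sum_le_sum fun e he => ?_
    have : (1 : ℝ) ≤ e := by exact_mod_cast Nat.pos_of_mem_divisors he
    exact Real.rpow_le_rpow_of_exponent_le this h1
  · rw [max_eq_left hs]
    unfold sigmaR
    rw [← Nat.sum_div_divisors n (fun e => (e : ℝ) ^ s), Finset.mul_sum]
    refine Finset.sum_le_sum fun e he => ?_
    have he1 : (1 : ℝ) ≤ e := by exact_mod_cast Nat.pos_of_mem_divisors he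
    rw [Nat.cast_div (Nat.dvd_of_mem_divisors he) (by positivity),
      Real.div_rpow (by positivity) (by positivity), div_eq_mul_inv,
      ← Real.rpow_neg (by positivity)]
    gcongr

lemma sigmaR_neg_one_mono {q n : ℕ} (hn : n ≠ 0) (h : q ∣ n) :
    sigmaR (-1) q ≤ sigmaR (-1) n :=
  Finset.sum_le_sum_of_subset_of_nonneg (Nat.divisors_subset_of_dvd hn h)
    fun _ _ _ => by positivity

/-- The witness is `Q = ∏_{j < J} (1 + jN)`, whose divisors include the numbers
`1 + jN ≤ (1 + N)(1 + j)`. -/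
lemma exists_large_sigmaR_neg_one (N : ℕ) (hN : 0 < N) (K : ℝ) :
    ∃ Q : ℕ, 0 < Q ∧ Q.Coprime N ∧ K < sigmaR (-1) Q := by
  obtain ⟨J, hJ⟩ := (Real.tendsto_sum_range_one_div_nat_succ_atTop.eventually_gt_atTop
    ((1 + N) * K)).exists
  have hQ : ∏ j ∈ Finset.range J, (1 + j * N) ≠ 0 :=
    Finset.prod_ne_zero_iff.2 fun j _ => by omega
  refine ⟨∏ j ∈ Finset.range J, (1 + j * N), Nat.pos_of_ne_zero hQ,
    Nat.Coprime.prod_left fun j _ => by simp, ?_⟩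
  have hsub : (Finset.range J).image (fun j => 1 + j * N) ⊆
      (∏ j ∈ Finset.range J, (1 + j * N)).divisors := by
    intro e he
    obtain ⟨j, hj, rfl⟩ := Finset.mem_image.1 he
    exact Nat.mem_divisors.2 ⟨Finset.dvd_prod_of_mem (fun j => 1 + j * N) hj, hQ⟩
  have hN' : (0 : ℝ) < 1 + N := by positivity
  have hle := Finset.sum_le_sum_of_subset_of_nonneg (f := fun e : ℕ => (e : ℝ) ^ (-1 : ℝ)) hsub
    fun _ _ _ => by positivity
  rw [Finset.sum_image (fun x _ y _ h => by
    have : x * N = y * N := by simpa using h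
    exact Nat.eq_of_mul_eq_mul_right hN this)] at hle
  refine lt_of_lt_of_le ?_ hle
  refine lt_of_lt_of_le ((lt_div_iff₀' hN').2 hJ) ?_
  rw [Finset.sum_div]
  refine Finset.sum_le_sum fun j _ => ?_
  rw [Real.rpow_neg_one, div_div, one_div]
  gcongr
  push_cast
  have hj0 : (0 : ℝ) ≤ j := by positivity
  have hN0 : (0 : ℝ) ≤ N := by positivity
  linarith

/-- Since `c(am+b) - a(cm+d) = bc - ad`, a modulus `Q` coprime to `ad - bc` and dividing `cm + d`
is coprime to `am + b`, which is what makes the relevant residue class admissible in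
Dirichlet's theorem. -/
lemma exists_mul_prime_and_dvd {a b c d Q : ℕ} (ha : 0 < a) (hc : 0 < c) (hQ : 0 < Q)
    (hQc : Q.Coprime c) (hQD : Q.Coprime ((a * d - b * c : ℤ)).natAbs) (n : ℕ) :
    ∃ m > n, ∃ p : ℕ, p.Prime ∧ a * m + b = a.gcd b * p ∧ Q ∣ c * m + d := by
  obtain ⟨m₀, hm₀⟩ : ∃ m₀, Q ∣ c * m₀ + d := by
    obtain ⟨k, hk0, hkd⟩ := Nat.chineseRemainder hQc 0 d
    have hdle : d ≤ k + Q * c * d := by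
      have : 1 * d ≤ Q * c * d := Nat.mul_le_mul_right d (Nat.mul_pos hQ hc)
      omega
    have hkd' : d ≡ k + Q * c * d [MOD c] := by
      have h0 : Q * c * d ≡ 0 [MOD c] :=
        (Nat.modEq_zero_iff_dvd).2 ⟨Q * d, by ring⟩
      simpa using (hkd.add h0).symm
    obtain ⟨m₀, hm₀⟩ := (Nat.modEq_iff_dvd' hdle).1 hkd'
    refine ⟨m₀, ?_⟩
    rw [← hm₀, Nat.sub_add_cancel hdle]
    exact dvd_add ((Nat.modEq_zero_iff_dvd).1 hk0) ⟨c * d, by ring⟩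
  obtain ⟨a', b', hcop, ha', hb'⟩ := Nat.exists_coprime a b
  set g := a.gcd b
  have ha'0 : 0 < a' := Nat.pos_of_ne_zero fun h => by simp [h] at ha'; omega
  have hr1 : (a' * m₀ + b').Coprime a' := by
    simpa using hcop.symm
  have hr2 : (a' * m₀ + b').Coprime Q := by
    refine Nat.coprime_of_dvd' fun q hq hqr hqQ => ?_
    have hqD : (q : ℤ) ∣ a * d - b * c := by
      have h1 : (q : ℤ) ∣ c * m₀ + d := by exact_mod_cast hqQ.trans hm₀
      have h2 : (q : ℤ) ∣ a' * m₀ + b' := by exact_mod_cast hqr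
      have haz : (a : ℤ) = a' * g := by exact_mod_cast ha'
      have hbz : (b : ℤ) = b' * g := by exact_mod_cast hb'
      have h3 := dvd_sub (h1.mul_left (a : ℤ)) (h2.mul_left (c * g : ℤ))
      have h4 : (a : ℤ) * (c * m₀ + d) - c * g * (a' * m₀ + b') = a * d - b * c := by
        rw [haz, hbz]; ring
      rwa [h4] at h3
    rw [← Nat.Coprime.gcd_eq_one hQD]
    exact Nat.dvd_gcd hqQ (Int.natCast_dvd.1 hqD)
  have hr : (a' * m₀ + b').Coprime (a' * Q) := hr1.mul_right hr2
  obtain ⟨p, hpn, hp, hpr⟩ := Nat.forall_exists_prime_gt_and_modEq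
    (a' * n + b' + (a' * m₀ + b')) (Nat.mul_pos ha'0 hQ).ne' hr
  obtain ⟨k, hk⟩ := (Nat.modEq_iff_dvd' (by omega)).1 hpr.symm
  have hpk : p = a' * (m₀ + Q * k) + b' := by
    have : p = a' * Q * k + (a' * m₀ + b') := by omega
    rw [this]; ring
  refine ⟨m₀ + Q * k, ?_, p, hp, ?_, ?_⟩
  · by_contra hcon
    have : a' * (m₀ + Q * k) ≤ a' * n := Nat.mul_le_mul_left _ (not_lt.1 hcon)
    omega
  · rw [hpk]
    nth_rewrite 1 [ha', hb']
    ring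
  · have : c * (m₀ + Q * k) + d = (c * m₀ + d) + Q * (c * k) := by ring
    rw [this]
    exact dvd_add hm₀ ⟨_, rfl⟩

lemma exists_sigmaR_lt {a b c d : ℕ} (ha : 0 < a) (hc : 0 < c) (habcd : a * d ≠ b * c) (n : ℕ) :
    ∃ m > n, ∀ s : ℝ, -1 ≤ s → s ≤ 1 → sigmaR s (a * m + b) < sigmaR s (c * m + d) := by
  have hD : 0 < ((a * d - b * c : ℤ)).natAbs := by
    refine Int.natAbs_pos.2 (sub_ne_zero.2 ?_)
    exact_mod_cast habcd
  obtain ⟨Q, hQ, hcop, hlarge⟩ := exists_large_sigmaR_neg_one _ (Nat.mul_pos hc hD)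
    (2 * a.gcd b * (a + b))
  obtain ⟨m, hm, p, hp, hmp, hdvd⟩ := exists_mul_prime_and_dvd ha hc hQ
    (Nat.Coprime.coprime_mul_right_right hcop) (Nat.Coprime.coprime_mul_left_right hcop) n
  refine ⟨m, hm, fun s hs1 hs2 => ?_⟩
  have hpos : 0 < c * m + d := Nat.add_pos_left (Nat.mul_pos hc (by omega)) d
  have hpos' : (0 : ℝ) < (c * m + d : ℕ) := by exact_mod_cast hpos
  have hab : (1 : ℝ) ≤ a + b := by exact_mod_cast (by omega : 1 ≤ a + b)
  have hle : ((a * m + b : ℕ) : ℝ) ≤ (a + b) * (c * m + d : ℕ) := by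
    have h1 : m ≤ c * m + d := (Nat.le_mul_of_pos_left m hc).trans (Nat.le_add_right _ _)
    have h2 : a * m + b ≤ (a + b) * (c * m + d) := by
      rw [add_mul]
      exact Nat.add_le_add (Nat.mul_le_mul_left a h1) (Nat.le_mul_of_pos_right b hpos)
    exact_mod_cast h2
  have ht1 : max s 0 ≤ 1 := max_le hs2 zero_le_one
  calc sigmaR s (a * m + b)
      ≤ 2 * a.gcd b * ((a * m + b : ℕ) : ℝ) ^ max s 0 := by
        rw [hmp]; exact sigmaR_mul_prime_le hp
    _ ≤ 2 * a.gcd b * ((a + b) * (c * m + d : ℕ)) ^ max s 0 := by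
        gcongr
    _ = 2 * a.gcd b * ((a + b : ℝ) ^ max s 0 * ((c * m + d : ℕ) : ℝ) ^ max s 0) := by
        rw [Real.mul_rpow (by positivity) (by positivity)]
    _ ≤ 2 * a.gcd b * ((a + b) * ((c * m + d : ℕ) : ℝ) ^ max s 0) := by
        gcongr
        exact (Real.rpow_le_rpow_of_exponent_le hab ht1).trans_eq (Real.rpow_one _)
    _ = ((c * m + d : ℕ) : ℝ) ^ max s 0 * (2 * a.gcd b * (a + b)) := by ring
    _ < ((c * m + d : ℕ) : ℝ) ^ max s 0 * sigmaR (-1) (c * m + d) :=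
        mul_lt_mul_of_pos_left (hlarge.trans_le (sigmaR_neg_one_mono hpos.ne' hdvd))
          (by positivity)
    _ ≤ sigmaR s (c * m + d) := rpow_mul_le_sigmaR hs1 hs2

theorem stmt_8 (ℓ : ℕ) (hℓ : 0 < ℓ) (sv : Fin ℓ → ℝ) (hmono : StrictMono sv)
    (hlow : ∀ i, -1 ≤ sv i) (hhigh : ∀ i, sv i ≤ 1)
    (a b c d : ℕ) (ha : 0 < a) (hc : 0 < c) (habcd : a * d ≠ b * c) :
    {m : ℕ | 0 < m ∧ ∀ i : Fin ℓ,
        sigmaR (sv i) (a * m + b) < sigmaR (sv i) (c * m + d)}.Infinite ∧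
    {n : ℕ | 0 < n ∧ ∀ i : Fin ℓ,
        sigmaR (sv i) (a * n + b) > sigmaR (sv i) (c * n + d)}.Infinite := by
  constructor
  · refine Set.infinite_of_forall_exists_gt fun n => ?_
    obtain ⟨m, hm, h⟩ := exists_sigmaR_lt ha hc habcd n
    exact ⟨m, ⟨by omega, fun i => h _ (hlow i) (hhigh i)⟩, hm⟩
  · refine Set.infinite_of_forall_exists_gt fun n => ?_
    have hne : c * b ≠ d * a := fun h => habcd (by linarith)
    obtain ⟨m, hm, h⟩ := exists_sigmaR_lt hc ha hne n
    exact ⟨m, ⟨by omega, fun i => h _ (hlow i) (hhigh i)⟩, hm⟩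
end

section
/- Let s be a real number with |s| > 1 and let a, b, c, d be nonnegative integers with a > 0 and c > 0. Then there exist positive real numbers R and M such that for every positive integer n, R^{|s|} / ζ(|s|) ≤ σ_s(an+b) / σ_s(cn+d) ≤ ζ(|s|)·M^{|s|}. -/
/-- `ζ(t) = ∑_{k=1}^∞ k^{-t}` for real `t`. -/
noncomputable def zetaR (t : ℝ) : ℝ := ∑' k : ℕ, ((k : ℝ) + 1) ^ (-t)

lemma sigmaR_neg_le_zetaR (t : ℝ) (ht : 1 < t) (m : ℕ) : sigmaR (-t) m ≤ zetaR t := by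
  have hsum : Summable fun k : ℕ => ((k : ℝ) + 1) ^ (-t) := by
    have h := (summable_nat_add_iff (f := fun k : ℕ => (k : ℝ) ^ (-t)) 1).2
      (Real.summable_nat_rpow.2 (by linarith))
    simpa using h
  calc sigmaR (-t) m ≤ ∑ k ∈ Finset.Ico 1 (m + 1), (k : ℝ) ^ (-t) :=
        Finset.sum_le_sum_of_subset_of_nonneg (Finset.filter_subset _ _)
          fun _ _ _ => by positivity
    _ = ∑ k ∈ Finset.range m, ((k : ℝ) + 1) ^ (-t) := by
        rw [Finset.sum_Ico_eq_sum_range]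
        simp [add_comm]
    _ ≤ zetaR t := hsum.sum_le_tsum _ fun _ _ => by positivity

lemma one_le_sigmaR (s : ℝ) (m : ℕ) (hm : 0 < m) : 1 ≤ sigmaR s m := by
  have h := Finset.single_le_sum (s := m.divisors) (f := fun d : ℕ => (d : ℝ) ^ s)
    (fun _ _ => by positivity) (Nat.one_mem_divisors.2 hm.ne')
  simpa [sigmaR] using h

/-- The involution `d ↦ m / d` on the divisors of `m` exchanges the exponents `s` and `-s`. -/
lemma sigmaR_eq_rpow_mul (s : ℝ) (m : ℕ) : sigmaR s m = (m : ℝ) ^ s * sigmaR (-s) m := by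
  unfold sigmaR
  rw [← Nat.sum_div_divisors m (fun d : ℕ => (d : ℝ) ^ s), Finset.mul_sum]
  refine Finset.sum_congr rfl fun d hd => ?_
  have hd0 : (d : ℝ) ≠ 0 := by exact_mod_cast (Nat.pos_of_mem_divisors hd).ne'
  rw [Nat.cast_div (Nat.dvd_of_mem_divisors hd) hd0,
    Real.div_rpow (by positivity) (by positivity), Real.rpow_neg (by positivity), div_eq_mul_inv]

theorem stmt_9 (s : ℝ) (hs : 1 < |s|) (a b c d : ℕ) (ha : 0 < a) (hc : 0 < c) :
    ∃ R M : ℝ, 0 < R ∧ 0 < M ∧ ∀ n : ℕ, 0 < n →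
      R ^ |s| / zetaR |s| ≤ sigmaR s (a * n + b) / sigmaR s (c * n + d) ∧
      sigmaR s (a * n + b) / sigmaR s (c * n + d) ≤ zetaR |s| * M ^ |s| := by
  have hz : 1 ≤ zetaR |s| :=
    (one_le_sigmaR (-|s|) 1 one_pos).trans (sigmaR_neg_le_zetaR _ hs 1)
  -- The quotient of two values of `σ_{-|s|}`, which both signs of `s` reduce to.
  have key : ∀ m k : ℕ, 0 < m → 0 < k →
      1 / zetaR |s| ≤ sigmaR (-|s|) m / sigmaR (-|s|) k ∧
      sigmaR (-|s|) m / sigmaR (-|s|) k ≤ zetaR |s| := by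
    intro m k hm hk
    have hm1 := one_le_sigmaR (-|s|) m hm
    have hk1 := one_le_sigmaR (-|s|) k hk
    have hm2 := sigmaR_neg_le_zetaR _ hs m
    have hk2 := sigmaR_neg_le_zetaR _ hs k
    exact ⟨div_le_div₀ (by linarith) hm1 (by linarith) hk2,
      (div_le_self (by linarith) hk1).trans hm2⟩
  have hac : (0 : ℝ) < a := by exact_mod_cast ha
  have hcc : (0 : ℝ) < c := by exact_mod_cast hc
  rcases le_or_gt s 0 with h0 | h0
  · refine ⟨1, 1, one_pos, one_pos, fun n hn => ?_⟩
    have h := key (a * n + b) (c * n + d) (by positivity) (by positivity)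
    rw [abs_of_nonpos h0, neg_neg] at *
    simpa using h
  · refine ⟨a / (c + d), (a + b) / c, by positivity, by positivity, fun n hn => ?_⟩
    obtain ⟨h1, h2⟩ := key (a * n + b) (c * n + d) (by positivity) (by positivity)
    rw [abs_of_pos h0] at *
    have hn1 : (1 : ℝ) ≤ n := by exact_mod_cast hn
    have hb : (0 : ℝ) ≤ b := b.cast_nonneg
    have hd : (0 : ℝ) ≤ d := d.cast_nonneg
    rw [sigmaR_eq_rpow_mul s (a * n + b), sigmaR_eq_rpow_mul s (c * n + d), mul_div_mul_comm,
      ← Real.div_rpow (by positivity) (by positivity)]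
    push_cast
    have hq1 : (a : ℝ) / (c + d) ≤ (a * n + b) / (c * n + d) := by
      rw [div_le_div_iff₀ (by positivity) (by positivity)]
      nlinarith [mul_nonneg (mul_nonneg hac.le hd) (sub_nonneg.2 hn1),
        mul_nonneg hb hcc.le, mul_nonneg hb hd]
    have hq2 : ((a : ℝ) * n + b) / (c * n + d) ≤ (a + b) / c := by
      rw [div_le_div_iff₀ (by positivity) (by positivity)]
      nlinarith [mul_nonneg (mul_nonneg hb hcc.le) (sub_nonneg.2 hn1),
        mul_nonneg hac.le hd, mul_nonneg hb hd]
    have hz0 : 0 < zetaR s := by linarith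
    constructor
    · rw [div_eq_mul_one_div]
      exact mul_le_mul (Real.rpow_le_rpow (by positivity) hq1 h0.le) h1 (by positivity)
        (by positivity)
    · rw [mul_comm (zetaR s)]
      exact mul_le_mul (Real.rpow_le_rpow (by positivity) hq2 h0.le) h2
        (le_trans (by positivity) h1) (by positivity)
end

section
/- Let s > 0 be a real number and let n = ⌈s⌉ be the smallest integer greater than or equal to s. If p is a prime with p > 1 + n·2^{n+1}, then σ_s(p−1) > σ_s(p) and σ_s(p) < σ_s(p+1). In particular, there are infinitely many positive integers m with σ_s(m) > σ_s(m+1), and infinitely many positive integers r with σ_s(r) < σ_s(r+1). -/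
lemma sigmaR_prime (s : ℝ) {p : ℕ} (hp : p.Prime) : sigmaR s p = 1 + (p : ℝ) ^ s := by
  rw [sigmaR, hp.divisors, Finset.sum_pair hp.one_lt.ne]
  simp

lemma sum_le_sigmaR (s : ℝ) {m : ℕ} {A : Finset ℕ} (h : A ⊆ m.divisors) :
    ∑ d ∈ A, (d : ℝ) ^ s ≤ sigmaR s m :=
  Finset.sum_le_sum_of_subset_of_nonneg h fun _ _ _ => by positivity

lemma sigmaR_prime_lt_succ {s : ℝ} (hs : 0 < s) {p : ℕ} (hp : p.Prime) :
    sigmaR s p < sigmaR s (p + 1) := by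
  have h := sum_le_sigmaR s (m := p + 1) (A := {1, p + 1}) (by
    intro d hd
    simp only [Finset.mem_insert, Finset.mem_singleton] at hd
    rcases hd with rfl | rfl <;> simp)
  rw [Finset.sum_pair (by have := hp.pos; omega)] at h
  rw [sigmaR_prime s hp]
  have h2 : (p : ℝ) ^ s < ((p + 1 : ℕ) : ℝ) ^ s :=
    Real.rpow_lt_rpow (by positivity) (by push_cast; linarith) hs
  simp only [Nat.cast_one, Real.one_rpow] at h
  linarith

lemma exp_le_one_add_two_mul {x : ℝ} (h0 : 0 ≤ x) (h1 : x ≤ 1 / 2) :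
    Real.exp x ≤ 1 + 2 * x := by
  have h := Real.add_one_le_exp (-x)
  have hm : Real.exp (-x) * Real.exp x = 1 := by rw [← Real.exp_add]; simp
  have he := Real.exp_pos x
  -- `(1 - x) * exp x ≤ 1 ≤ (1 - x) * (1 + 2x)`
  have h3 : (1 - x) * Real.exp x ≤ 1 := by nlinarith
  have h4 : 1 ≤ (1 - x) * (1 + 2 * x) := by nlinarith
  exact le_of_mul_le_mul_left (h3.trans h4) (by linarith)

/-- The analytic estimate `(q + 1)^s < q^s + (q / 2)^s`, written with `q = 2k`. -/
lemma rpow_succ_lt {s : ℝ} (hs : 0 < s) {n : ℕ} (hn : s ≤ n) {k : ℝ}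
    (hk : (n : ℝ) * 2 ^ (n + 1) < 2 * k) :
    (2 * k + 1) ^ s < (2 * k) ^ s + k ^ s := by
  have hn0 : (0 : ℝ) < n := hs.trans_le hn
  have hk0 : 0 < k := by
    have : (0 : ℝ) < n * 2 ^ (n + 1) := by positivity
    linarith
  have hx : (n : ℝ) / (2 * k) < 1 / 2 ^ (n + 1) := by
    rw [div_lt_div_iff₀ (by positivity) (by positivity)]
    linarith
  have hhalf : (1 : ℝ) / 2 ^ (n + 1) ≤ 1 / 2 := by
    have : (1 : ℝ) ≤ 2 ^ n := one_le_pow₀ (by norm_num)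
    gcongr
    rw [pow_succ]
    linarith
  have hdouble : 2 * ((1 : ℝ) / 2 ^ (n + 1)) = 1 / 2 ^ n := by
    rw [pow_succ]; field_simp
  have h1 : (1 + 1 / (2 * k)) ^ s < 1 + 1 / (2 : ℝ) ^ s := by
    calc (1 + 1 / (2 * k)) ^ s ≤ (Real.exp (1 / (2 * k))) ^ s := by
          refine Real.rpow_le_rpow (by positivity) ?_ hs.le
          linarith [Real.add_one_le_exp (1 / (2 * k))]
      _ = Real.exp (s / (2 * k)) := by
          rw [← Real.exp_mul]
          congr 1
          ring
      _ ≤ Real.exp (n / (2 * k)) := by gcongr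
      _ ≤ 1 + 2 * (n / (2 * k)) :=
          exp_le_one_add_two_mul (by positivity) (by linarith)
      _ < 1 + 1 / (2 : ℝ) ^ n := by linarith
      _ ≤ 1 + 1 / (2 : ℝ) ^ s := by
          rw [← Real.rpow_natCast 2 n]
          gcongr
          norm_num
  have e1 : (2 * k + 1) ^ s = (2 * k) ^ s * (1 + 1 / (2 * k)) ^ s := by
    rw [← Real.mul_rpow (by positivity) (by positivity)]
    congr 1
    field_simp
  have e2 : (2 * k) ^ s * (1 + 1 / (2 : ℝ) ^ s) = (2 * k) ^ s + k ^ s := by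
    rw [Real.mul_rpow (by norm_num) hk0.le]
    have : (0 : ℝ) < 2 ^ s := by positivity
    field_simp
  rw [e1, ← e2]
  exact mul_lt_mul_of_pos_left h1 (by positivity)

lemma sigmaR_prime_lt_pred {s : ℝ} (hs : 0 < s) {n : ℕ} (hn : s ≤ n) {p : ℕ} (hp : p.Prime)
    (hpn : p > 1 + n * 2 ^ (n + 1)) : sigmaR s p < sigmaR s (p - 1) := by
  have hn1 : 1 ≤ n := by
    have : (0 : ℝ) < n := hs.trans_le hn
    exact_mod_cast this
  have h4 : 4 ≤ n * 2 ^ (n + 1) := by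
    calc 4 = 1 * 2 ^ (1 + 1) := by norm_num
      _ ≤ n * 2 ^ (n + 1) := by gcongr; norm_num
  obtain ⟨k, hk⟩ := hp.odd_of_ne_two (by omega)
  subst hk
  have hsub := sum_le_sigmaR s (m := 2 * k) (A := {1, k, 2 * k}) (by
    intro d hd
    simp only [Finset.mem_insert, Finset.mem_singleton] at hd
    rw [Nat.mem_divisors]
    rcases hd with rfl | rfl | rfl
    · exact ⟨one_dvd _, by omega⟩
    · exact ⟨dvd_mul_left _ _, by omega⟩
    · exact ⟨dvd_rfl, by omega⟩)
  -- `k ≠ 1`, so that `1, k, 2k` are distinct, because `2k > 4`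
  rw [Finset.sum_insert (by simp only [Finset.mem_insert, Finset.mem_singleton]; omega),
    Finset.sum_pair (by omega)] at hsub
  rw [sigmaR_prime s hp, Nat.add_sub_cancel]
  have h := rpow_succ_lt hs hn (k := k) (by
    have : n * 2 ^ (n + 1) < 2 * k := by omega
    exact_mod_cast this)
  push_cast at hsub ⊢
  rw [Real.one_rpow] at hsub
  linarith

theorem stmt_18 (s : ℝ) (hs : 0 < s) (n : ℕ) (hn : n = ⌈s⌉₊) :
    (∀ p : ℕ, p.Prime → p > 1 + n * 2 ^ (n + 1) →
      sigmaR s (p - 1) > sigmaR s p ∧ sigmaR s p < sigmaR s (p + 1)) ∧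
    {m : ℕ | 0 < m ∧ sigmaR s m > sigmaR s (m + 1)}.Infinite ∧
    {r : ℕ | 0 < r ∧ sigmaR s r < sigmaR s (r + 1)}.Infinite := by
  have hsn : s ≤ n := hn ▸ Nat.le_ceil s
  refine ⟨fun p hp hpn => ⟨sigmaR_prime_lt_pred hs hsn hp hpn, sigmaR_prime_lt_succ hs hp⟩,
    Set.infinite_of_forall_exists_gt fun a => ?_, Set.infinite_of_forall_exists_gt fun a => ?_⟩
  · obtain ⟨p, hle, hp⟩ := Nat.exists_infinite_primes (a + 2 + n * 2 ^ (n + 1))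
    refine ⟨p - 1, ⟨by omega, ?_⟩, by omega⟩
    rw [Nat.sub_add_cancel hp.one_le]
    exact sigmaR_prime_lt_pred hs hsn hp (by omega)
  · obtain ⟨p, hle, hp⟩ := Nat.exists_infinite_primes (a + 1)
    exact ⟨p, ⟨hp.pos, sigmaR_prime_lt_succ hs hp⟩, by omega⟩
end

section
/- Let s > 0 be a real number, let a be a positive integer, and let b, d be distinct nonnegative integers with gcd(a, b) = 1 and gcd(a, d) = 1. Then there are infinitely many positive integers m with σ_s(am+b) < σ_s(am+d), and infinitely many positive integers n with σ_s(an+b) > σ_s(an+d). -/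
/-- The divisors `1`, `k` and `kq` of `kq` bound `σ_s(kq)` from below; applied with `k = N / q`. -/
lemma sigmaR_lower (s : ℝ) {k q : ℕ} (hk : 1 < k) (hq : 1 < q) :
    1 + (k : ℝ) ^ s + ((k * q : ℕ) : ℝ) ^ s ≤ sigmaR s (k * q) := by
  have hlt : k < k * q := lt_mul_of_one_lt_right (by omega) hq
  have hsub : ({1, k, k * q} : Finset ℕ) ⊆ (k * q).divisors := by
    intro x hx
    simp only [Finset.mem_insert, Finset.mem_singleton] at hx
    rw [Nat.mem_divisors]
    refine ⟨?_, by omega⟩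
    rcases hx with rfl | rfl | rfl <;> simp
  refine le_trans (le_of_eq ?_) (Finset.sum_le_sum_of_subset_of_nonneg hsub
    fun i _ _ => Real.rpow_nonneg (Nat.cast_nonneg i) s)
  rw [Finset.sum_insert (by simp only [Finset.mem_insert, Finset.mem_singleton]; omega),
    Finset.sum_pair hlt.ne]
  simp [add_assoc]

/-- Arbitrarily large `m` with `am+b` prime and `q ∣ am+d`, by Dirichlet's theorem modulo `aq`. -/
lemma exists_prime_and_dvd {a b d q : ℕ} (ha : 0 < a) (hbd : b ≠ d) (hab : Nat.gcd a b = 1)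
    (hq : q.Prime) (hqa : a < q) (hqb : b < q) (hqd : d < q) (M : ℕ) :
    ∃ m, M < m ∧ (a * m + b).Prime ∧ q ∣ a * m + d := by
  obtain ⟨m₀, hm₀⟩ : ∃ m₀, q ∣ a * m₀ + d := by
    have : Fact q.Prime := ⟨hq⟩
    have ha0 : (a : ZMod q) ≠ 0 := by
      rw [Ne, ZMod.natCast_eq_zero_iff]
      exact Nat.not_dvd_of_pos_of_lt ha hqa
    refine ⟨(-(d : ZMod q) / a).val, ?_⟩
    rw [← ZMod.natCast_eq_zero_iff]
    push_cast
    rw [ZMod.natCast_zmod_val]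
    field_simp
    ring
  have hcop : Nat.Coprime (a * m₀ + b) (a * q) := by
    refine Nat.Coprime.mul_right ?_ ?_
    · rw [Nat.coprime_comm]
      simpa [Nat.Coprime] using hab
    · rw [Nat.coprime_comm, hq.coprime_iff_not_dvd]
      intro h
      -- Otherwise `q` divides `b - d`, which is nonzero and smaller than `q` in absolute value.
      have h1 : b ≡ d [MOD q] := Nat.ModEq.add_left_cancel' (a * m₀)
        ((Nat.modEq_zero_iff_dvd.2 h).trans (Nat.modEq_zero_iff_dvd.2 hm₀).symm)
      exact hbd (h1.eq_of_lt_of_lt hqb hqd)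
  obtain ⟨p, hpgt, hp, hmod⟩ := Nat.forall_exists_prime_gt_and_modEq
    (a * m₀ + b + a * M) (Nat.mul_ne_zero ha.ne' hq.ne_zero) hcop
  obtain ⟨t, ht⟩ := (Nat.modEq_iff_dvd' (by omega)).1 hmod.symm
  have hpe : p = a * (m₀ + q * t) + b := by
    have : p = a * m₀ + b + a * q * t := by omega
    rw [this]; ring
  refine ⟨m₀ + q * t, ?_, hpe ▸ hp, ?_⟩
  · have : a * M < a * (m₀ + q * t) := by omega
    exact lt_of_mul_lt_mul_left this (Nat.zero_le _)
  · have : a * (m₀ + q * t) + d = (a * m₀ + d) + q * (a * t) := by ring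
    rw [this]
    exact dvd_add hm₀ (dvd_mul_right _ _)

lemma infinite_lt (s : ℝ) (hs : 0 < s) (a : ℕ) (ha : 0 < a) (b d : ℕ)
    (hbd : b ≠ d) (hab : Nat.gcd a b = 1) :
    {m : ℕ | 0 < m ∧ sigmaR s (a * m + b) < sigmaR s (a * m + d)}.Infinite := by
  obtain ⟨q, hqge, hq⟩ := Nat.exists_infinite_primes (a + b + d + 1)
  have hq0 : (0 : ℝ) < q := by exact_mod_cast hq.pos
  have hqs : 0 < (q : ℝ)⁻¹ ^ s := by positivity
  -- `p < c N` is what makes `p ^ s < N ^ s * (1 + q ^ (-s))`.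
  set c : ℝ := (1 + (q : ℝ)⁻¹ ^ s) ^ s⁻¹ with hc
  have hc1 : 1 < c := Real.one_lt_rpow (by linarith) (by positivity)
  have hcs : c ^ s = 1 + (q : ℝ)⁻¹ ^ s := Real.rpow_inv_rpow (by positivity) hs.ne'
  obtain ⟨M, hM⟩ := exists_nat_gt ((b : ℝ) / (c - 1))
  refine Set.infinite_of_forall_exists_gt fun n => ?_
  obtain ⟨m, hm, hp, k, hk⟩ :=
    exists_prime_and_dvd ha hbd hab hq (by omega) (by omega) (by omega) (n + M + q)
  refine ⟨m, ⟨by omega, ?_⟩, by omega⟩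
  have hma : m ≤ a * m := Nat.le_mul_of_pos_left m ha
  have hk1 : 1 < k := by
    by_contra h
    have : q * k ≤ q * 1 := Nat.mul_le_mul_left q (by omega)
    omega
  have hlow := sigmaR_lower s hk1 hq.one_lt
  rw [mul_comm k q, ← hk] at hlow
  rw [sigmaR_prime s hp]
  refine lt_of_lt_of_le ?_ hlow
  have hkN : (k : ℝ) = ((a * m + d : ℕ) : ℝ) * (q : ℝ)⁻¹ := by
    rw [hk]; push_cast; field_simp
  have hlt : ((a * m + b : ℕ) : ℝ) < ((a * m + d : ℕ) : ℝ) * c := by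
    have h1 : (b : ℝ) < M * (c - 1) := (div_lt_iff₀ (by linarith)).1 hM
    have h2 : (M : ℝ) ≤ (a : ℝ) * m := by
      have : M ≤ a * m := by omega
      exact_mod_cast this
    have h3 : (M : ℝ) * (c - 1) ≤ a * m * (c - 1) :=
      mul_le_mul_of_nonneg_right h2 (by linarith)
    have h4 : (0 : ℝ) ≤ d * c := by positivity
    push_cast
    linarith
  have hpow := Real.rpow_lt_rpow (Nat.cast_nonneg _) hlt hs
  rw [Real.mul_rpow (Nat.cast_nonneg _) (by positivity), hcs] at hpow
  rw [hkN, Real.mul_rpow (Nat.cast_nonneg _) (by positivity)]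
  linarith

theorem stmt_19 (s : ℝ) (hs : 0 < s) (a : ℕ) (ha : 0 < a) (b d : ℕ)
    (hbd : b ≠ d) (hab : Nat.gcd a b = 1) (had : Nat.gcd a d = 1) :
    {m : ℕ | 0 < m ∧ sigmaR s (a * m + b) < sigmaR s (a * m + d)}.Infinite ∧
    {n : ℕ | 0 < n ∧ sigmaR s (a * n + b) > sigmaR s (a * n + d)}.Infinite :=
  ⟨infinite_lt s hs a ha b d hbd hab, infinite_lt s hs a ha d b hbd.symm had⟩
end
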